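/- Let 0 < μ < 1, k = p + (b+2)/2 ∉ {0, −1, −2, …} with Re(μk) ≥ 0, let φ be convex univalent on E with φ(0) = 1, and let 0 ≤ λ₁ < λ₂ be real. Then N_{k,c}^0(λ₂, μ, φ) ⊆ N_{k,c}^0(λ₁, μ, φ). -/

import Mathlib

open Complex Set

noncomputable section

/-- The open unit disk in ℂ. -/
def unitDisk : Set ℂ := Metric.ball 0 1

/-- Pochhammer symbol `(x)_n = x (x+1) ⋯ (x+n-1)`. -/
def poch (x : ℂ) (n : ℕ) : ℂ := ∏ i ∈ Finset.range n, (x + i)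

/-- `k` is not a nonpositive integer `0, -1, -2, …`. -/
def NotNonposInt (k : ℂ) : Prop := ∀ n : ℕ, k ≠ -(n : ℂ)

/-- `a` is the coefficient sequence of a function `f(z) = z + ∑_{n≥2} a_n z^n`
in the class `A` of normalized analytic functions on the unit disk. -/
def InA (a : ℕ → ℂ) : Prop :=
  a 0 = 0 ∧ a 1 = 1 ∧ ∀ z ∈ unitDisk, Summable fun n => a n * z ^ n

/-- The generalized Struve convolution operator `S_k^c` applied to
`f(z) = z + ∑_{n≥2} a_n z^n`, namely
`S_k^c f(z) = z + ∑_{n≥1} (-c/4)^n a_{n+1} z^{n+1} / ((3/2)_n (k)_n)`. -/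
def struveOp (k c : ℂ) (a : ℕ → ℂ) (z : ℂ) : ℂ :=
  z + ∑' n : ℕ,
    (-c / 4) ^ (n + 1) / (poch (3 / 2) (n + 1) * poch k (n + 1)) * a (n + 2) * z ^ (n + 2)

/-- Subordination of analytic functions on the unit disk. -/
def Subord (f g : ℂ → ℂ) : Prop :=
  ∃ w : ℂ → ℂ, AnalyticOnNhd ℂ w unitDisk ∧ w 0 = 0 ∧ (∀ z ∈ unitDisk, ‖w z‖ < 1) ∧
    ∀ z ∈ unitDisk, f z = g (w z)

/-- `(z / F z) ^ μ` (principal branch), with the removable singularity at `z = 0`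
filled in with the value `1`. -/
def ratioPow (μ : ℝ) (F : ℂ → ℂ) (z : ℂ) : ℂ :=
  (if z = 0 then 1 else z / F z) ^ (μ : ℂ)

/-- `F z / G z`, with the removable singularity at `z = 0` filled in with value `1`. -/
def ratioQ (F G : ℂ → ℂ) (z : ℂ) : ℂ := if z = 0 then 1 else F z / G z

/-- The expression
`e^{iα} {(1+λ)(z/S_{k+1}f)^μ − λ (S_k f/S_{k+1} f)(z/S_{k+1} f)^μ}`. -/
def Jfun (α : ℝ) (lam : ℂ) (μ : ℝ) (Sk Sk1 : ℂ → ℂ) (z : ℂ) : ℂ :=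
  exp (α * I) * ((1 + lam) * ratioPow μ Sk1 z - lam * ratioQ Sk Sk1 z * ratioPow μ Sk1 z)

/-- Membership `f ∈ N_{k,c}^α(λ, μ, φ)` for `f(z) = z + ∑_{n≥2} a_n z^n`. -/
def memN (α : ℝ) (lam : ℂ) (μ : ℝ) (k c : ℂ) (φ : ℂ → ℂ) (a : ℕ → ℂ) : Prop :=
  Subord (Jfun α lam μ (struveOp k c a) (struveOp (k + 1) c a))
    (fun z => (Real.cos α : ℂ) * φ z + (Real.sin α : ℂ) * I)

/-- `φ` is convex univalent on the unit disk. -/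
def ConvexUnivalent (φ : ℂ → ℂ) : Prop :=
  AnalyticOnNhd ℂ φ unitDisk ∧ InjOn φ unitDisk ∧ Convex ℝ (φ '' unitDisk)

/-- `F z / z` is nonvanishing on the unit disk. -/
def Nonvan (F : ℂ → ℂ) : Prop := ∀ z ∈ unitDisk, z ≠ 0 → F z ≠ 0

/-- The Gaussian hypergeometric function `₂F₁(a,b,c;z)` (as a series). -/
def hyp2F1 (a b c z : ℂ) : ℂ :=
  ∑' n : ℕ, poch a n * poch b n / (poch c n * (n.factorial : ℂ)) * z ^ n

open Filter Topology Metric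
open scoped ComplexOrder

/-!
Write `S_κ f(z) = z G_κ(z)` and `p = G_{k+1}^{-μ}`. The Pochhammer identity
`k / (k)_n = (k + n) / (k + 1)_n` becomes `z G_{k+1}' = k (G_k - G_{k+1})`, so that the functional
defining the class is `J_λ = p + (λ / (μ k)) z p'`. Hence `J_λ ≺ φ` gives `p ≺ φ`
(Hallenbeck–Ruscheweyh): otherwise a half-plane containing `φ(E)` misses a value of `p`, and where
the corresponding linear functional of `p` is maximal on a closed disk, `z p'` points out of the
half-plane. As `J_λ` is affine in `λ` and `p = J_0`, convexity of `φ(E)` concludes.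

The power is the principal branch, so analyticity of `p` is not automatic. If `G_{k+1}` left the
slit plane, then by the open mapping theorem it would cross the negative axis at a point where
`J_λ` inherits the jump of the power, whereas `J_λ ≺ φ` makes `J_λ` continuous.
-/

section BranchCut

theorem not_continuousAt_cpow_const_of_neg {x a : ℂ} (hx : x < 0) (ha : ∀ n : ℤ, a ≠ n) :
    ¬ ContinuousAt (fun y : ℂ => y ^ a) x := by
  intro hcont
  obtain ⟨hre, him⟩ : x.re < 0 ∧ x.im = 0 := by simpa [Complex.lt_def] using hx
  have hlim : Tendsto (fun y : ℂ => exp (log y * a)) (𝓝 x) (𝓝 (x ^ a)) := by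
    refine hcont.tendsto.congr' ?_
    filter_upwards [isOpen_ne.mem_nhds hx.ne] with y hy using cpow_def_of_ne_zero hy a
  have hbelow : (𝓝[{z : ℂ | z.im < 0}] x).NeBot := by
    rw [← mem_closure_iff_nhdsWithin_neBot, Complex.closure_setOfPred_im_lt]
    exact him.le
  have habove : (𝓝[{z : ℂ | 0 ≤ z.im}] x).NeBot :=
    mem_closure_iff_nhdsWithin_neBot.1 (subset_closure him.ge)
  have hlim_below := tendsto_nhds_unique (hlim.mono_left nhdsWithin_le_nhds)
    ((tendsto_log_nhdsWithin_im_neg_of_re_neg_of_im_zero hre him).mul_const a).cexp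
  have hlim_above := tendsto_nhds_unique (hlim.mono_left nhdsWithin_le_nhds)
    ((tendsto_log_nhdsWithin_im_nonneg_of_re_neg_of_im_zero hre him).mul_const a).cexp
  obtain ⟨n, hn⟩ := exp_eq_exp_iff_exists_int.1 (hlim_above.symm.trans hlim_below)
  refine ha n (mul_right_cancel₀ two_pi_I_ne_zero ?_)
  linear_combination hn

theorem frequently_lt_nhds_complex (w : ℂ) : ∃ᶠ y in 𝓝 w, y < w := by
  have hlim : Tendsto (fun t : ℝ => w - t) (𝓝[>] 0) (𝓝 w) := by
    have hcont : Continuous fun t : ℝ => w - (t : ℂ) := by fun_prop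
    simpa using (hcont.tendsto 0).mono_left nhdsWithin_le_nhds
  refine hlim.frequently (Eventually.frequently ?_)
  filter_upwards [self_mem_nhdsWithin] with t ht
  simpa using ht

theorem frequently_neg_of_nonpos {G : ℂ → ℂ} {z : ℂ} (hopen : 𝓝 (G z) ≤ map G (𝓝 z))
    (hz : G z ≤ 0) : ∃ᶠ y in 𝓝[≠] z, G y < 0 := by
  rw [frequently_nhdsWithin_iff]
  refine (frequently_map.1 ((frequently_lt_nhds_complex (G z)).filter_mono hopen)).mono ?_
  rintro y hy
  exact ⟨hy.trans_le hz, fun h : y = z => hy.ne (congrArg G h)⟩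

theorem not_continuousAt_inv_cpow_of_neg {G : ℂ → ℂ} {z a : ℂ}
    (hopen : 𝓝 (G z) ≤ map G (𝓝 z)) (hz : G z < 0) (ha : ∀ n : ℤ, a ≠ n) :
    ¬ ContinuousAt (fun y => (G y)⁻¹ ^ a) z := by
  intro hcont
  have hinv_cpow : ContinuousAt (fun y : ℂ => y⁻¹ ^ a) (G z) :=
    Tendsto.mono_left (tendsto_map'_iff (f := fun y : ℂ => y⁻¹ ^ a).2 hcont) hopen
  have hinv_neg : (G z)⁻¹ < 0 := by
    rw [← neg_pos, ← inv_neg]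
    exact inv_pos.2 (neg_pos.2 hz)
  refine not_continuousAt_cpow_const_of_neg hinv_neg ha ?_
  have hinv : ContinuousAt (fun y : ℂ => y⁻¹) (G z)⁻¹ := continuousAt_inv₀ (inv_ne_zero hz.ne)
  simpa [Function.comp_def] using
    ContinuousAt.comp (g := fun y : ℂ => y⁻¹ ^ a) (by simpa using hinv_cpow) hinv

theorem mapsTo_slitPlane_of_continuousOn_mul_inv_cpow {U : Set ℂ} {G M : ℂ → ℂ} {x y a : ℂ}
    (hU : IsOpen U) (hU' : IsPreconnected U)
    (hG : AnalyticOnNhd ℂ G U) (hx : x ∈ U) (hGx : G x ∈ slitPlane)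
    (hM : AnalyticOnNhd ℂ M U) (hy : y ∈ U) (hMy : M y ≠ 0) (ha : ∀ n : ℤ, a ≠ n)
    (hcont : ContinuousOn (fun z => M z * (G z)⁻¹ ^ a) U) :
    MapsTo G U slitPlane := by
  intro z₀ hz₀
  by_contra hGz₀
  have hopen : ∀ z ∈ U, 𝓝 (G z) ≤ map G (𝓝 z) := by
    intro z hz
    refine (hG z hz).eventually_constant_or_nhds_le_map_nhds.resolve_left fun hconst => hGz₀ ?_
    have heq : EqOn G (fun _ => G z) U :=
      hG.eqOn_of_preconnected_of_eventuallyEq analyticOnNhd_const hU' hz hconst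
    rwa [heq hz₀, ← heq hx]
  have hM_ne : ∀ᶠ z in 𝓝[≠] z₀, M z ≠ 0 := by
    by_contra hfreq
    exact hMy (hM.eqOn_zero_of_preconnected_of_frequently_eq_zero hU' hz₀ hfreq hy)
  have hGz₀_nonpos : G z₀ ≤ 0 := by simpa [mem_slitPlane_iff_not_le_zero] using hGz₀
  obtain ⟨z, hGz, hMz, hzU⟩ :=
    ((frequently_neg_of_nonpos (hopen z₀ hz₀) hGz₀_nonpos).and_eventually
      (hM_ne.and (nhdsWithin_le_nhds (hU.mem_nhds hz₀)))).exists
  refine not_continuousAt_inv_cpow_of_neg (hopen z hzU) hGz ha ?_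
  have hMz_cont := (hM z hzU).continuousAt
  refine ((hcont.continuousAt (hU.mem_nhds hzU)).div hMz_cont hMz).congr ?_
  filter_upwards [hMz_cont.eventually_ne hMz] with w hw using mul_div_cancel_left₀ _ hw

theorem inv_mem_slitPlane {z : ℂ} (hz : z ∈ slitPlane) : z⁻¹ ∈ slitPlane := by
  have hpos : 0 < normSq z := normSq_pos.2 (slitPlane_ne_zero hz)
  rw [mem_slitPlane_iff] at hz ⊢
  rw [inv_re, inv_im]
  exact hz.imp (div_pos · hpos) fun him => div_ne_zero (neg_ne_zero.2 him) hpos.ne'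

end BranchCut

section HallenbeckRuscheweyh

theorem mul_deriv_nonneg_of_isMaxOn_re {f : ℂ → ℂ} {z : ℂ} (hf : DifferentiableAt ℂ f z)
    (hmax : IsMaxOn (fun w => (f w).re) (closedBall 0 ‖z‖) z) : 0 ≤ z * deriv f z := by
  set D := z * deriv f z
  have hderiv : ∀ u : ℂ, ‖u‖ ≤ 1 → (D * u).re ≤ D.re := by
    intro u hu
    have hmem : z * u ∈ closedBall (0 : ℂ) ‖z‖ := by
      simpa using mul_le_of_le_one_right (norm_nonneg z) hu
    have hcone := sub_mem_posTangentConeAt_of_segment_subset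
      ((convex_closedBall (0 : ℂ) ‖z‖).segment_subset
        (mem_closedBall_zero_iff.2 le_rfl) hmem)
    have hfderiv := reCLM.hasFDerivAt.comp z hf.hasDerivAt.complexToReal_fderiv
    have hnonpos := hmax.localize.hasFDerivWithinAt_nonpos hfderiv.hasFDerivWithinAt hcone
    have hvalue : deriv f z * (z * u - z) = D * u - D := by ring
    simpa [hvalue] using hnonpos
  -- The unit vector `u` conjugate to `D` turns `D * u` into `‖D‖`.
  have hnorm_le : ‖D‖ ≤ D.re := by
    obtain ⟨u, hu, hDu⟩ : ∃ u : ℂ, ‖u‖ ≤ 1 ∧ D * u = ‖D‖ := by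
      refine ⟨exp (-(D.arg * I)), by simp [norm_exp], ?_⟩
      calc D * exp (-(D.arg * I))
          = ‖D‖ * exp (D.arg * I) * exp (-(D.arg * I)) := by rw [norm_mul_exp_arg_mul_I]
        _ = ‖D‖ := by rw [mul_assoc, ← exp_add, add_neg_cancel, exp_zero, mul_one]
    simpa [hDu] using hderiv u hu
  exact re_eq_norm.1 (le_antisymm (re_le_norm D) hnorm_le)

theorem mapsTo_ball_of_add_mul_deriv_mem {p : ℂ → ℂ} {R : ℝ} {δ : ℂ} {Ω : Set ℂ}
    (hp : DifferentiableOn ℂ p (ball 0 R)) (hδ : 0 ≤ δ.re) (hΩ : Convex ℝ Ω) (hΩ' : IsOpen Ω)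
    (hmem : ∀ z ∈ ball 0 R, p z + δ * (z * deriv p z) ∈ Ω) :
    MapsTo p (ball 0 R) Ω := by
  intro z₁ hz₁
  by_contra hpz₁
  obtain ⟨f, hf⟩ := RCLike.geometric_hahn_banach_open_point (𝕜 := ℂ) hΩ hΩ' hpz₁
  have hsub : closedBall (0 : ℂ) ‖z₁‖ ⊆ ball 0 R := closedBall_subset_ball (by simpa using hz₁)
  have hcont : ContinuousOn (fun z => (f (p z)).re) (closedBall 0 ‖z₁‖) :=
    (continuous_re.comp f.continuous).comp_continuousOn (hp.continuousOn.mono hsub)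
  obtain ⟨z₀, hz₀, hmax⟩ :=
    (isCompact_closedBall (0 : ℂ) ‖z₁‖).exists_isMaxOn ⟨z₁, by simp⟩ hcont
  have hpz₀ : DifferentiableAt ℂ p z₀ := hp.differentiableAt (isOpen_ball.mem_nhds (hsub hz₀))
  have hderiv : deriv (fun z => f (p z)) z₀ = f (deriv p z₀) :=
    (f.hasFDerivAt.comp_hasDerivAt z₀ hpz₀.hasDerivAt).deriv
  have hnonneg : 0 ≤ z₀ * f (deriv p z₀) := by
    rw [← hderiv]
    exact mul_deriv_nonneg_of_isMaxOn_re (f.differentiableAt.comp z₀ hpz₀)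
      (hmax.on_subset (closedBall_subset_closedBall (by simpa using hz₀)))
  obtain ⟨hre, him⟩ := Complex.nonneg_iff.1 hnonneg
  have hlt : (f (p z₀)).re + δ.re * (z₀ * f (deriv p z₀)).re < (f (p z₁)).re := by
    have hf_smul : ∀ b w : ℂ, f (b * w) = b * f w := fun b w => f.map_smul b w
    have h := hf _ (hmem z₀ (hsub hz₀))
    rwa [map_add, hf_smul, hf_smul, RCLike.re_to_complex, RCLike.re_to_complex, add_re, mul_re δ,
      ← him, mul_zero, sub_zero] at h
  have hle : (f (p z₁)).re ≤ (f (p z₀)).re := hmax (by simp : z₁ ∈ closedBall (0 : ℂ) ‖z₁‖)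
  linarith [mul_nonneg hδ hre]

end HallenbeckRuscheweyh

section UnivalentInverse

variable {U : Set ℂ} {f : ℂ → ℂ}

theorem not_eventually_eq_const_of_injOn {z : ℂ} (hU : U ∈ 𝓝 z) (hinj : InjOn f U) :
    ¬ ∀ᶠ w in 𝓝 z, f w = f z := by
  intro hconst
  obtain ⟨w, ⟨hfw, hw⟩, hne⟩ :=
    (((hconst.and hU).filter_mono nhdsWithin_le_nhds).and
      (self_mem_nhdsWithin (s := {z}ᶜ))).exists
  exact hne (hinj hw (mem_of_mem_nhds hU) hfw)

theorem nhds_le_map_nhds_of_injOn {z : ℂ} (hf : AnalyticAt ℂ f z) (hU : U ∈ 𝓝 z)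
    (hinj : InjOn f U) : 𝓝 (f z) ≤ map f (𝓝 z) :=
  hf.eventually_constant_or_nhds_le_map_nhds.resolve_left
    (not_eventually_eq_const_of_injOn hU hinj)

theorem isOpen_image_of_injOn (hU : IsOpen U) (hf : AnalyticOnNhd ℂ f U) (hinj : InjOn f U) :
    IsOpen (f '' U) := by
  rw [isOpen_iff_mem_nhds]
  rintro _ ⟨z, hz, rfl⟩
  exact nhds_le_map_nhds_of_injOn (hf z hz) (hU.mem_nhds hz) hinj
    (image_mem_map (hU.mem_nhds hz))

theorem continuousAt_invFunOn_of_injOn {z : ℂ} (hf : AnalyticAt ℂ f z) (hU : U ∈ 𝓝 z)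
    (hinj : InjOn f U) : ContinuousAt (Function.invFunOn f U) (f z) := by
  have hleft : ∀ᶠ w in 𝓝 z, Function.invFunOn f U (f w) = w := by
    filter_upwards [hU] with w hw using hinj.leftInvOn_invFunOn hw
  rw [ContinuousAt, hleft.self_of_nhds]
  exact Tendsto.mono_left (tendsto_map'_iff.2 (tendsto_id.congr' (hleft.mono fun _ h => h.symm)))
    (nhds_le_map_nhds_of_injOn hf hU hinj)

theorem eventually_deriv_ne_zero_of_injOn {z : ℂ} (hf : AnalyticAt ℂ f z) (hU : U ∈ 𝓝 z)
    (hinj : InjOn f U) : ∀ᶠ w in 𝓝[≠] z, deriv f w ≠ 0 := by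
  refine hf.deriv.eventually_eq_zero_or_eventually_ne_zero.resolve_left fun hzero => ?_
  obtain ⟨r, hr, hball⟩ := eventually_nhds_iff_ball.1 (hzero.and hf.eventually_analyticAt)
  refine not_eventually_eq_const_of_injOn hU hinj ?_
  filter_upwards [ball_mem_nhds z hr] with w hw
  exact isOpen_ball.is_const_of_deriv_eq_zero (convex_ball z r).isPreconnected
    (fun y hy => (hball y hy).2.differentiableAt.differentiableWithinAt)
    (fun y hy => (hball y hy).1) hw (mem_ball_self hr)

-- The inverse is differentiable off the values at critical points, which are isolated, and it is
-- continuous there, so those singularities are removable.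
theorem analyticOnNhd_invFunOn_of_injOn (hU : IsOpen U) (hf : AnalyticOnNhd ℂ f U)
    (hinj : InjOn f U) : AnalyticOnNhd ℂ (Function.invFunOn f U) (f '' U) := by
  set g := Function.invFunOn f U
  have hcont : ∀ z ∈ U, ContinuousAt g (f z) := fun z hz =>
    continuousAt_invFunOn_of_injOn (hf z hz) (hU.mem_nhds hz) hinj
  have hleft : ∀ z ∈ U, g (f z) = z := fun z hz => hinj.leftInvOn_invFunOn hz
  have himage : ∀ z ∈ U, f '' U ∈ 𝓝 (f z) := fun z hz =>
    (isOpen_image_of_injOn hU hf hinj).mem_nhds (mem_image_of_mem f hz)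
  rintro _ ⟨z₀, hz₀, rfl⟩
  refine analyticAt_of_differentiable_on_punctured_nhds_of_continuousAt ?_ (hcont z₀ hz₀)
  have hderiv := eventually_deriv_ne_zero_of_injOn (hf z₀ hz₀) (hU.mem_nhds hz₀) hinj
  have hlim : Tendsto g (𝓝 (f z₀)) (𝓝 z₀) := by
    simpa [ContinuousAt, hleft z₀ hz₀] using hcont z₀ hz₀
  rw [eventually_nhdsWithin_iff] at hderiv ⊢
  filter_upwards [hlim.eventually hderiv, himage z₀ hz₀]
  rintro _ hderiv_ne ⟨z, hz, rfl⟩ hne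
  rw [hleft z hz] at hderiv_ne
  have hfz : HasDerivAt f (deriv f z) (g (f z)) := by
    rw [hleft z hz]
    exact (hf z hz).differentiableAt.hasDerivAt
  refine (HasDerivAt.of_local_left_inverse (hcont z hz) hfz
    (hderiv_ne fun h => hne (congrArg f h)) ?_).differentiableAt
  filter_upwards [himage z hz] with y hy using Function.invFunOn_eq hy

end UnivalentInverse

section Subordination

variable {f g φ : ℂ → ℂ}

theorem isOpen_unitDisk : IsOpen unitDisk := isOpen_ball

theorem isPreconnected_unitDisk : IsPreconnected unitDisk := (convex_ball (0 : ℂ) 1).isPreconnected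

theorem zero_mem_unitDisk : (0 : ℂ) ∈ unitDisk := mem_ball_self one_pos

theorem mem_unitDisk_iff {z : ℂ} : z ∈ unitDisk ↔ ‖z‖ < 1 := mem_ball_zero_iff

theorem Subord.congr (h : Subord f φ) (heq : EqOn g f unitDisk) : Subord g φ := by
  obtain ⟨w, hw, hw0, hw1, hfw⟩ := h
  exact ⟨w, hw, hw0, hw1, fun z hz => (heq hz).trans (hfw z hz)⟩

theorem subord_iff_of_injOn (hφ : AnalyticOnNhd ℂ φ unitDisk) (hinj : InjOn φ unitDisk) :
    Subord f φ ↔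
      AnalyticOnNhd ℂ f unitDisk ∧ f 0 = φ 0 ∧ MapsTo f unitDisk (φ '' unitDisk) := by
  constructor
  · rintro ⟨w, hw, hw0, hw1, hfw⟩
    have hw_mem : MapsTo w unitDisk unitDisk := fun z hz => mem_unitDisk_iff.2 (hw1 z hz)
    refine ⟨?_, by rw [hfw 0 zero_mem_unitDisk, hw0], fun z hz => ⟨w z, hw_mem hz, ?_⟩⟩
    · exact (hφ.comp hw hw_mem).congr isOpen_unitDisk fun z hz => (hfw z hz).symm
    · exact (hfw z hz).symm
  · rintro ⟨hf, hf0, hmaps⟩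
    refine ⟨fun z => Function.invFunOn φ unitDisk (f z), ?_, ?_, fun z hz => ?_, fun z hz => ?_⟩
    · exact (analyticOnNhd_invFunOn_of_injOn isOpen_unitDisk hφ hinj).comp hf hmaps
    · simpa only [hf0] using hinj.leftInvOn_invFunOn zero_mem_unitDisk
    · exact mem_unitDisk_iff.1 (Function.invFunOn_mem (hmaps hz))
    · exact (Function.invFunOn_eq (hmaps hz)).symm

namespace ConvexUnivalent

theorem subord_iff (hφ : ConvexUnivalent φ) :
    Subord f φ ↔
      AnalyticOnNhd ℂ f unitDisk ∧ f 0 = φ 0 ∧ MapsTo f unitDisk (φ '' unitDisk) :=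
  subord_iff_of_injOn hφ.1 hφ.2.1

theorem const_mul_add_const (hφ : ConvexUnivalent φ) {b : ℂ} (hb : b ≠ 0) (d : ℂ) :
    ConvexUnivalent fun z => b * φ z + d := by
  obtain ⟨hanalytic, hinj, hconvex⟩ := hφ
  refine ⟨(analyticOnNhd_const.mul hanalytic).add analyticOnNhd_const, fun x hx y hy hxy => ?_, ?_⟩
  · exact hinj hx hy (mul_left_cancel₀ hb (add_right_cancel hxy))
  · have himage : (fun z => b * φ z + d) '' unitDisk =
        (fun w => d + w) '' (LinearMap.mulLeft ℝ b '' (φ '' unitDisk)) := by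
      simp only [image_image, LinearMap.mulLeft_apply, add_comm d]
    rw [himage]
    exact (hconvex.linear_image _).translate d

theorem subord_convexCombo (hφ : ConvexUnivalent φ) {s t : ℝ} (hs : 0 ≤ s) (ht : 0 ≤ t)
    (hst : s + t = 1) (hf : Subord f φ) (hg : Subord g φ) :
    Subord (fun z => s * f z + t * g z) φ := by
  rw [hφ.subord_iff] at hf hg ⊢
  obtain ⟨hf, hf0, hf_maps⟩ := hf
  obtain ⟨hg, hg0, hg_maps⟩ := hg
  refine ⟨(analyticOnNhd_const.mul hf).add (analyticOnNhd_const.mul hg), ?_, fun z hz => ?_⟩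
  · rw [hf0, hg0, ← add_mul, ← ofReal_add, hst, ofReal_one, one_mul]
  · simpa using hφ.2.2 (hf_maps hz) (hg_maps hz) hs ht hst

theorem subord_of_subord_add_mul_deriv (hφ : ConvexUnivalent φ) {δ : ℂ} (hδ : 0 ≤ δ.re)
    (hf : AnalyticOnNhd ℂ f unitDisk) (h : Subord (fun z => f z + δ * (z * deriv f z)) φ) :
    Subord f φ := by
  rw [hφ.subord_iff] at h ⊢
  obtain ⟨-, h0, hmaps⟩ := h
  exact ⟨hf, by simpa using h0, mapsTo_ball_of_add_mul_deriv_mem hf.differentiableOn hδ hφ.2.2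
    (isOpen_image_of_injOn isOpen_unitDisk hφ.1 hφ.2.1) hmaps⟩

end ConvexUnivalent

end Subordination

section PowerSeries

variable {d : ℕ → ℂ} {z : ℂ}

theorem norm_mul_pow_le_of_mem_ball (d : ℕ → ℂ) {ρ : ℝ} (n : ℕ) (hz : z ∈ ball (0 : ℂ) ρ) :
    ‖d n * z ^ n‖ ≤ ‖d n * (ρ : ℂ) ^ n‖ := by
  have hzρ : ‖z‖ ≤ |ρ| := (mem_ball_zero_iff.1 hz).le.trans (le_abs_self ρ)
  simp only [norm_mul, norm_pow, norm_real, Real.norm_eq_abs]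
  gcongr

theorem exists_mem_ball_ofReal_mem_unitDisk (hz : z ∈ unitDisk) :
    ∃ ρ : ℝ, z ∈ ball (0 : ℂ) ρ ∧ (ρ : ℂ) ∈ unitDisk := by
  obtain ⟨ρ, hzρ, hρ⟩ := exists_between (mem_unitDisk_iff.1 hz)
  exact ⟨ρ, mem_ball_zero_iff.2 hzρ,
    mem_unitDisk_iff.2 (by simpa [abs_of_pos ((norm_nonneg z).trans_lt hzρ)] using hρ)⟩

theorem analyticOnNhd_tsum_mul_pow (hd : ∀ z ∈ unitDisk, Summable fun n => d n * z ^ n) :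
    AnalyticOnNhd ℂ (fun z => ∑' n, d n * z ^ n) unitDisk := by
  intro z hz
  obtain ⟨ρ, hzρ, hρ⟩ := exists_mem_ball_ofReal_mem_unitDisk hz
  exact (differentiableOn_tsum_of_summable_norm (hd ρ hρ).norm (fun n => by fun_prop) isOpen_ball
    fun n w hw => norm_mul_pow_le_of_mem_ball d n hw).analyticAt (isOpen_ball.mem_nhds hzρ)

theorem hasSum_natCast_mul_mul_pow (hd : ∀ z ∈ unitDisk, Summable fun n => d n * z ^ n)
    (hz : z ∈ unitDisk) :
    HasSum (fun n : ℕ => n * (d n * z ^ n)) (z * deriv (fun z => ∑' n, d n * z ^ n) z) := by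
  obtain ⟨ρ, hzρ, hρ⟩ := exists_mem_ball_ofReal_mem_unitDisk hz
  have hsum := hasSum_deriv_of_summable_norm (hd ρ hρ).norm (fun n => by fun_prop) isOpen_ball
    (fun n w hw => norm_mul_pow_le_of_mem_ball d n hw) hzρ
  refine (hsum.mul_left z).congr_fun fun n => ?_
  cases n with
  | zero => simp
  | succ n =>
    simp only [deriv_const_mul_field', deriv_pow_field, Nat.add_sub_cancel]
    ring

end PowerSeries

section StruveSeries

/-- The coefficients `(-c/4)^n / ((3/2)_n (κ)_n)` by which `S_κ^c` multiplies those of `f`. -/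
def struveWeight (κ c : ℂ) (n : ℕ) : ℂ := (-c / 4) ^ n / (poch (3 / 2) n * poch κ n)

/-- The power series of `S_κ^c f(z) / z`, whose value at the removable singularity `z = 0` is
`a 1`. -/
def struveSeries (κ c : ℂ) (a : ℕ → ℂ) (z : ℂ) : ℂ :=
  ∑' n, struveWeight κ c n * a (n + 1) * z ^ n

variable {k c κ z : ℂ} {a : ℕ → ℂ}

theorem poch_succ (x : ℂ) (n : ℕ) : poch x (n + 1) = poch x n * (x + n) :=
  Finset.prod_range_succ _ n

theorem poch_succ_left (x : ℂ) (n : ℕ) : poch x (n + 1) = x * poch (x + 1) n := by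
  simp only [poch, Finset.prod_range_succ', Nat.cast_zero, add_zero, mul_comm x, Nat.cast_succ,
    add_right_comm _ (1 : ℂ), add_assoc]

theorem NotNonposInt.add_natCast_ne_zero (hk : NotNonposInt k) (n : ℕ) : k + n ≠ 0 :=
  fun h => hk n (eq_neg_of_add_eq_zero_left h)

theorem NotNonposInt.ne_zero (hk : NotNonposInt k) : k ≠ 0 := by
  simpa using hk 0

theorem NotNonposInt.poch_ne_zero (hk : NotNonposInt k) (n : ℕ) : poch k n ≠ 0 :=
  Finset.prod_ne_zero_iff.2 fun i _ => hk.add_natCast_ne_zero i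

theorem struveWeight_zero (κ c : ℂ) : struveWeight κ c 0 = 1 := by
  simp [struveWeight, poch]

theorem struveWeight_succ (κ c : ℂ) (n : ℕ) :
    struveWeight κ c (n + 1) = -c / 4 * (3 / 2 + (n : ℂ))⁻¹ * (κ + n)⁻¹ * struveWeight κ c n := by
  simp only [struveWeight, poch_succ, pow_succ, div_eq_mul_inv, mul_inv]
  ring

theorem mul_struveWeight (hk : NotNonposInt k) (c : ℂ) (n : ℕ) :
    k * struveWeight k c n = (k + n) * struveWeight (k + 1) c n := by
  have hpoch : poch k n * (k + n) = k * poch (k + 1) n := by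
    rw [← poch_succ, poch_succ_left]
  have hpoch_ne : poch (k + 1) n ≠ 0 := right_ne_zero_of_mul
    (hpoch ▸ mul_ne_zero (hk.poch_ne_zero n) (hk.add_natCast_ne_zero n))
  have hratio : k * (poch k n)⁻¹ = (k + n) * (poch (k + 1) n)⁻¹ := by
    field_simp [hk.poch_ne_zero n]
    linear_combination -hpoch
  simp only [struveWeight, div_eq_mul_inv, mul_inv]
  linear_combination (-c * 4⁻¹) ^ n * (poch (3 * 2⁻¹) n)⁻¹ * hratio

theorem tendsto_inv_add_natCast (x : ℂ) : Tendsto (fun n : ℕ => (x + n)⁻¹) atTop (𝓝 0) :=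
  tendsto_inv₀_cobounded.comp
    ((tendsto_const_add_cobounded x).comp tendsto_natCast_atTop_cobounded)

theorem summable_struveWeight (κ c : ℂ) : Summable (struveWeight κ c) := by
  have hratio : Tendsto (fun n : ℕ => -c / 4 * (3 / 2 + (n : ℂ))⁻¹ * (κ + n)⁻¹) atTop (𝓝 0) := by
    simpa using ((tendsto_inv_add_natCast (3 / 2)).const_mul (-c / 4)).mul
      (tendsto_inv_add_natCast κ)
  refine summable_of_ratio_norm_eventually_le (r := 1 / 2) (by norm_num) ?_
  filter_upwards [hratio.norm.eventually_le_const (by norm_num : ‖(0 : ℂ)‖ < 1 / 2)] with n hn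
  rw [struveWeight_succ, norm_mul]
  gcongr

namespace InA

theorem exists_norm_mul_pow_le (ha : InA a) (hz : z ∈ unitDisk) :
    ∃ C : ℝ, ∀ n, ‖a (n + 1) * z ^ n‖ ≤ C := by
  obtain ⟨ρ, hzρ, hρ⟩ := exists_mem_ball_ofReal_mem_unitDisk hz
  have hρ0 : (ρ : ℂ) ≠ 0 := ofReal_ne_zero.2 (pos_of_mem_ball hzρ).ne'
  have hsum : Summable fun n => a (n + 1) * (ρ : ℂ) ^ n := by
    refine (((summable_nat_add_iff 1).2 (ha.2.2 ρ hρ)).div_const (ρ : ℂ)).congr fun n => ?_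
    rw [pow_succ, ← mul_assoc, mul_div_cancel_right₀ _ hρ0]
  obtain ⟨C, hC⟩ := (isBounded_range_of_tendsto _ hsum.tendsto_atTop_zero).exists_norm_le
  exact ⟨C, fun n => (norm_mul_pow_le_of_mem_ball (fun n => a (n + 1)) n hzρ).trans
    (hC _ (mem_range_self n))⟩

theorem summable_struveSeries (ha : InA a) (κ c : ℂ) (hz : z ∈ unitDisk) :
    Summable fun n => struveWeight κ c n * a (n + 1) * z ^ n := by
  obtain ⟨C, hC⟩ := ha.exists_norm_mul_pow_le hz
  refine ((summable_struveWeight κ c).norm.mul_right C).of_norm_bounded fun n => ?_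
  rw [mul_assoc, norm_mul]
  gcongr
  exact hC n

theorem analyticOnNhd_struveSeries (ha : InA a) (κ c : ℂ) :
    AnalyticOnNhd ℂ (struveSeries κ c a) unitDisk :=
  analyticOnNhd_tsum_mul_pow fun _ hz => ha.summable_struveSeries κ c hz

theorem struveSeries_zero (ha : InA a) (κ c : ℂ) : struveSeries κ c a 0 = 1 := by
  rw [struveSeries, tsum_eq_single 0 fun n hn => by simp [hn]]
  simp [struveWeight_zero, ha.2.1]

theorem struveOp_eq_mul_struveSeries (ha : InA a) (κ c : ℂ) (hz : z ∈ unitDisk) :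
    struveOp κ c a z = z * struveSeries κ c a z := by
  rw [struveOp, struveSeries, (ha.summable_struveSeries κ c hz).tsum_eq_zero_add, mul_add,
    ← tsum_mul_left, struveWeight_zero, ha.2.1]
  congr 1
  · simp
  · exact tsum_congr fun n => by rw [struveWeight]; ring

theorem mul_deriv_struveSeries (ha : InA a) (hk : NotNonposInt k) (c : ℂ) (hz : z ∈ unitDisk) :
    z * deriv (struveSeries (k + 1) c a) z =
      k * (struveSeries k c a z - struveSeries (k + 1) c a z) := by
  have hderiv := hasSum_natCast_mul_mul_pow
    (fun _ hz => ha.summable_struveSeries (k + 1) c hz) hz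
  have hdiff := ((ha.summable_struveSeries k c hz).hasSum.sub
    (ha.summable_struveSeries (k + 1) c hz).hasSum).mul_left k
  refine hderiv.unique (hdiff.congr_fun fun n => ?_)
  linear_combination -a (n + 1) * z ^ n * mul_struveWeight hk c n

theorem mul_deriv_inv_struveSeries_cpow (ha : InA a) (hk : NotNonposInt k) (c μ : ℂ)
    (hz : z ∈ unitDisk) (hslit : struveSeries (k + 1) c a z ∈ slitPlane) :
    z * deriv (fun z => (struveSeries (k + 1) c a z)⁻¹ ^ μ) z =
      μ * k * ((1 - struveSeries k c a z / struveSeries (k + 1) c a z) *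
        (struveSeries (k + 1) c a z)⁻¹ ^ μ) := by
  have hne := slitPlane_ne_zero hslit
  have hderiv := ((ha.analyticOnNhd_struveSeries (k + 1) c z hz).differentiableAt.hasDerivAt.inv
    hne).cpow_const (c := μ) (inv_mem_slitPlane hslit)
  have hrel := ha.mul_deriv_struveSeries hk c hz
  refine (congrArg (z * ·) hderiv.deriv).trans ?_
  rw [Pi.inv_apply, cpow_sub _ _ (inv_ne_zero hne), cpow_one]
  field_simp
  linear_combination (-(1 / struveSeries (k + 1) c a z) ^ μ * μ) * hrel

theorem Jfun_eq (ha : InA a) (α μ : ℝ) (lam k c : ℂ) (hz : z ∈ unitDisk) :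
    Jfun α lam μ (struveOp k c a) (struveOp (k + 1) c a) z =
      exp (α * I) * ((1 + lam - lam * (struveSeries k c a z / struveSeries (k + 1) c a z)) *
        (struveSeries (k + 1) c a z)⁻¹ ^ (μ : ℂ)) := by
  have hpow : ratioPow μ (struveOp (k + 1) c a) z =
      (struveSeries (k + 1) c a z)⁻¹ ^ (μ : ℂ) := by
    rw [ratioPow]
    split_ifs with h
    · simp [h, ha.struveSeries_zero]
    · rw [ha.struveOp_eq_mul_struveSeries _ _ hz, div_mul_cancel_left₀ h]
  have hquot : ratioQ (struveOp k c a) (struveOp (k + 1) c a) z =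
      struveSeries k c a z / struveSeries (k + 1) c a z := by
    rw [ratioQ]
    split_ifs with h
    · simp [h, ha.struveSeries_zero]
    · rw [ha.struveOp_eq_mul_struveSeries _ _ hz, ha.struveOp_eq_mul_struveSeries _ _ hz,
        mul_div_mul_left _ _ h]
  rw [Jfun, hpow, hquot]
  ring

theorem Jfun_eq_add_mul_deriv (ha : InA a) (hk : NotNonposInt k) {μ : ℝ} (hμ : μ ≠ 0)
    (α : ℝ) (lam c : ℂ) (hz : z ∈ unitDisk) (hslit : struveSeries (k + 1) c a z ∈ slitPlane) :
    Jfun α lam μ (struveOp k c a) (struveOp (k + 1) c a) z =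
      exp (α * I) * ((struveSeries (k + 1) c a z)⁻¹ ^ (μ : ℂ) +
        lam / (μ * k) * (z * deriv (fun z => (struveSeries (k + 1) c a z)⁻¹ ^ (μ : ℂ)) z)) := by
  have hμ' : (μ : ℂ) ≠ 0 := ofReal_ne_zero.2 hμ
  have hk0 := hk.ne_zero
  rw [ha.Jfun_eq α μ lam k c hz, ha.mul_deriv_inv_struveSeries_cpow hk c μ hz hslit]
  field_simp
  ring

end InA

end StruveSeries

section ClassN

variable {α μ : ℝ} {k c lam : ℂ} {φ : ℂ → ℂ} {a : ℕ → ℂ}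

theorem InA.mapsTo_slitPlane_of_continuousOn_Jfun (ha : InA a) (hμ : ∀ n : ℤ, μ ≠ n)
    (hJ : ContinuousOn (Jfun α lam μ (struveOp k c a) (struveOp (k + 1) c a)) unitDisk) :
    MapsTo (struveSeries (k + 1) c a) unitDisk slitPlane := by
  set G := struveSeries (k + 1) c a
  set H := struveSeries k c a
  have hG : AnalyticOnNhd ℂ G unitDisk := ha.analyticOnNhd_struveSeries _ _
  have hH : AnalyticOnNhd ℂ H unitDisk := ha.analyticOnNhd_struveSeries _ _
  have hG0 : G 0 = 1 := ha.struveSeries_zero _ _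
  have hH0 : H 0 = 1 := ha.struveSeries_zero _ _
  have hμ0 : (μ : ℂ) ≠ 0 := by simpa using hμ 0
  refine mapsTo_slitPlane_of_continuousOn_mul_inv_cpow (a := μ)
    (M := fun z => G z - lam * (H z - G z)) isOpen_unitDisk isPreconnected_unitDisk
    hG zero_mem_unitDisk (by simp [hG0]) (hG.sub (analyticOnNhd_const.mul (hH.sub hG)))
    zero_mem_unitDisk (by simp [hG0, hH0]) (fun n => by exact_mod_cast hμ n) ?_
  refine ((continuousOn_const (c := exp (-(α * I)))).mul (hJ.mul hG.continuousOn)).congr ?_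
  intro z hz
  have hJz : Jfun α lam μ (struveOp k c a) (struveOp (k + 1) c a) z =
      exp (α * I) * ((1 + lam - lam * (H z / G z)) * (G z)⁻¹ ^ (μ : ℂ)) :=
    ha.Jfun_eq α μ lam k c hz
  simp only [Pi.mul_apply, hJz, exp_neg]
  by_cases h : G z = 0
  · simp [h, hμ0]
  · field_simp [exp_ne_zero]
    ring

theorem memN_zero_of_memN (hα : Real.cos α ≠ 0) (hμ : ∀ n : ℤ, μ ≠ n) (hk : NotNonposInt k)
    (hre : 0 ≤ (lam / (μ * k)).re) (hφ : ConvexUnivalent φ) (ha : InA a)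
    (h : memN α lam μ k c φ a) : memN α 0 μ k c φ a := by
  have hψ := hφ.const_mul_add_const (ofReal_ne_zero.2 hα) (Real.sin α * I)
  have hslit := ha.mapsTo_slitPlane_of_continuousOn_Jfun hμ (hψ.subord_iff.1 h).1.continuousOn
  have hμ0 : μ ≠ 0 := by simpa using hμ 0
  let p : ℂ → ℂ := fun z => (struveSeries (k + 1) c a z)⁻¹ ^ (μ : ℂ)
  have hp : AnalyticOnNhd ℂ p unitDisk := fun z hz =>
    ((ha.analyticOnNhd_struveSeries (k + 1) c z hz).inv (slitPlane_ne_zero (hslit hz))).cpow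
      analyticAt_const (inv_mem_slitPlane (hslit hz))
  have hsubord : Subord (fun z => exp (α * I) * p z)
      (fun z => (Real.cos α : ℂ) * φ z + (Real.sin α : ℂ) * I) := by
    refine hψ.subord_of_subord_add_mul_deriv hre (analyticOnNhd_const.mul hp)
      (Subord.congr h fun z hz => ?_)
    rw [deriv_const_mul _ (hp z hz).differentiableAt,
      ha.Jfun_eq_add_mul_deriv hk hμ0 α lam c hz (hslit hz)]
    ring
  exact hsubord.congr fun z hz => by simp [ha.Jfun_eq α μ 0 k c hz, p]

theorem convex_setOf_memN (hα : Real.cos α ≠ 0) (hφ : ConvexUnivalent φ) :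
    Convex ℝ {lam | memN α lam μ k c φ a} := by
  intro x hx y hy s t hs ht hst
  have hψ := hφ.const_mul_add_const (ofReal_ne_zero.2 hα) (Real.sin α * I)
  refine (hψ.subord_convexCombo hs ht hst hx hy).congr fun z _ => ?_
  have hst' : (s : ℂ) + t = 1 := by exact_mod_cast hst
  simp only [Jfun, real_smul]
  linear_combination -exp (α * I) * ratioPow μ (struveOp (k + 1) c a) z * hst'

end ClassN

section Parameters

theorem ne_intCast_of_pos_of_lt_one {x : ℝ} (hx0 : 0 < x) (hx1 : x < 1) (n : ℤ) : x ≠ n := by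
  rintro rfl
  norm_cast at hx0 hx1
  lia

theorem re_ofReal_div_nonneg {x : ℝ} {z : ℂ} (hx : 0 ≤ x) (hz : 0 ≤ z.re) :
    0 ≤ ((x : ℂ) / z).re := by
  rw [div_eq_mul_inv, re_ofReal_mul, inv_re]
  exact mul_nonneg hx (div_nonneg hz (normSq_nonneg z))

theorem ofReal_mem_segment_zero {x y : ℝ} (hx : 0 ≤ x) (hxy : x ≤ y) :
    (x : ℂ) ∈ segment ℝ 0 (y : ℂ) := by
  obtain ⟨s, t, hs, ht, hst, rfl⟩ : x ∈ segment ℝ 0 y := by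
    rw [segment_eq_Icc (hx.trans hxy)]
    exact ⟨hx, hxy⟩
  exact ⟨s, t, hs, ht, hst, by simp⟩

end Parameters

theorem classN_inclusion_general (α μ : ℝ) (k c lam₁ lam₂ : ℂ) (φ : ℂ → ℂ)
    (hα : Real.cos α ≠ 0) (hμ : ∀ n : ℤ, μ ≠ n)
    (hk : NotNonposInt k) (hre : 0 ≤ (lam₂ / (μ * k)).re)
    (hφ : ConvexUnivalent φ) (hlam : lam₁ ∈ segment ℝ 0 lam₂) :
    ∀ a : ℕ → ℂ, InA a → memN α lam₂ μ k c φ a → memN α lam₁ μ k c φ a := fun _ ha h =>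
  (convex_setOf_memN hα hφ).segment_subset (memN_zero_of_memN hα hμ hk hre hφ ha h) h hlam

/-- the inclusion `N_{k,c}^0(λ₂, μ, φ) ⊆ N_{k,c}^0(λ₁, μ, φ)`
for `0 ≤ λ₁ < λ₂`. -/
theorem classN_inclusion (μ : ℝ) (k c : ℂ) (φ : ℂ → ℂ) (lam₁ lam₂ : ℝ)
    (hμ0 : 0 < μ) (hμ1 : μ < 1)
    (hk : NotNonposInt k) (hre : 0 ≤ ((μ : ℂ) * k).re)
    (hφ : ConvexUnivalent φ) (hφ0 : φ 0 = 1)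
    (hlam1 : 0 ≤ lam₁) (hlam12 : lam₁ < lam₂) :
    ∀ a : ℕ → ℂ, InA a →
      memN 0 (lam₂ : ℂ) μ k c φ a → memN 0 (lam₁ : ℂ) μ k c φ a := by
  exact classN_inclusion_general 0 μ k c lam₁ lam₂ φ (by simp)
    (ne_intCast_of_pos_of_lt_one hμ0 hμ1) hk
    (re_ofReal_div_nonneg (hlam1.trans hlam12.le) hre) hφ
    (ofReal_mem_segment_zero hlam1 hlam12.le)
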